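/- arXiv:math/0608226 — 3 statements merged into one kernel-verified Lean document; each statement's English description precedes it below -/
import Mathlib

section
/- Let (M, ν) be a measure space, and let f and (f_k) be real-valued functions in L¹(M, ν). Assume that the sequence (f_k) is dominated in absolute value by a single function in L¹(M, ν), that lim_k ∫_M f_k dν = ∫_M f dν, and that limsup_k f_k(x) ≤ f(x) for ν-almost every x. Then f_k converges to f in L¹(M, ν), i.e. ∫_M |f_k − f| dν → 0 as k → ∞. -/
open MeasureTheory Filter Topology

/-- Special case (identity maps) of the paper's integration Lemma 4.3:
dominated sequence with `limsup fₖ ≤ f` a.e. and convergence of integrals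
implies `L¹` convergence. -/
theorem bergman_integration_lemma_id
    {M : Type*} [MeasurableSpace M] (ν : Measure M)
    (f : M → ℝ) (fk : ℕ → M → ℝ)
    (hf : Integrable f ν) (hfk : ∀ k, Integrable (fk k) ν)
    (g : M → ℝ) (hg : Integrable g ν)
    (hdom : ∀ k, ∀ᵐ x ∂ν, |fk k x| ≤ g x)
    (hlim : Tendsto (fun k => ∫ x, fk k x ∂ν) atTop (𝓝 (∫ x, f x ∂ν)))
    (hsup : ∀ᵐ x ∂ν, limsup (fun k => fk k x) atTop ≤ f x) :
    Tendsto (fun k => ∫ x, |fk k x - f x| ∂ν) atTop (𝓝 0) := by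
  have hpos : Tendsto (fun k => ∫ x, max (fk k x - f x) 0 ∂ν) atTop (𝓝 (∫ _x : M, (0 : ℝ) ∂ν)) := by
    refine tendsto_integral_of_dominated_convergence (fun x => g x + |f x|) ?_ (hg.add hf.abs) ?_ ?_
    · intro k
      exact ((hfk k).sub hf).pos_part.aestronglyMeasurable
    · intro k
      filter_upwards [hdom k] with x hx
      rw [Real.norm_eq_abs, abs_of_nonneg (le_max_right _ _)]
      have h1 := le_abs_self (fk k x)
      have h2 := neg_abs_le (f x)
      have h3 := abs_nonneg (fk k x)
      have h4 := abs_nonneg (f x)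
      exact max_le (by linarith) (by linarith)
    · filter_upwards [ae_all_iff.2 hdom, hsup] with x hx hs
      rw [Metric.tendsto_atTop]
      intro ε hε
      have hb : IsBoundedUnder (· ≤ ·) atTop (fun k => fk k x) :=
        isBoundedUnder_of ⟨g x, fun k => (le_abs_self _).trans (hx k)⟩
      have hev : ∀ᶠ k in atTop, fk k x < f x + ε :=
        eventually_lt_of_limsup_lt (by linarith) hb
      obtain ⟨N, hN⟩ := eventually_atTop.1 hev
      refine ⟨N, fun k hk => ?_⟩
      have := hN k hk
      rw [Real.dist_eq, sub_zero, abs_of_nonneg (le_max_right _ _)]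
      exact max_lt (by linarith) hε
  have heq : ∀ k, ∫ x, |fk k x - f x| ∂ν =
      2 * (∫ x, max (fk k x - f x) 0 ∂ν) - (∫ x, fk k x ∂ν - ∫ x, f x ∂ν) := by
    intro k
    have hi : Integrable (fun x => max (fk k x - f x) 0) ν := ((hfk k).sub hf).pos_part
    have hd : Integrable (fun x => fk k x - f x) ν := (hfk k).sub hf
    rw [← integral_sub (hfk k) hf, ← integral_const_mul, ← integral_sub (hi.const_mul 2) hd]
    congr 1
    ext x
    rcases le_total (fk k x - f x) 0 with h | h
    · rw [abs_of_nonpos h, max_eq_right h]; ring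
    · rw [abs_of_nonneg h, max_eq_left h]; ring
  simp_rw [heq]
  have := (hpos.const_mul 2).sub (hlim.sub_const (∫ x, f x ∂ν))
  simpa using this
end

section
/- Let V be an open subset of ℝ^d equipped with Lebesgue measure, and let U be a bounded measurable subset of ℝ^N equipped with Lebesgue measure. For each positive integer k and each u ∈ U let Φ_{k,u} : V → ℝ^d be an injective C¹ map onto its image Φ_{k,u}(V), depending jointly continuously on (x, u), such that the Jacobian determinants det DΦ_{k,u}(x) converge to 1 uniformly in (x, u) ∈ V × U as k → ∞. Let f and (f_k) be real-valued functions in L¹(V) with compact support in V, such that supp f_k ⊆ Φ_{k,u}(V) for all u ∈ U, such that (f_k) is dominated by a single function in L¹(V), and such that the functions (x, u) ↦ f_k(Φ_{k,u}(x)) are dominated by a single function in L¹(V × U). Assume (i) lim_k ∫_V f_k dx = ∫_V f dx, and (ii) limsup_k f_k(Φ_{k,u}(x)) ≤ f(x) for almost every (x, u) ∈ V × U. Then the functions (x, u) ↦ f_k(Φ_{k,u}(x)) converge to (x, u) ↦ f(x) in L¹(V × U); in particular there is a subsequence k_j such that f_{k_j}(Φ_{k_j,u}(x)) converges to f(x)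 for almost all pairs (x, u) ∈ V × U. -/
open MeasureTheory Filter Topology

lemma aux_aesm {d N : ℕ}
    (V : Set (Fin d → ℝ)) (hV : IsOpen V)
    (U : Set (Fin N → ℝ)) (hUmeas : MeasurableSet U)
    (Φ : (Fin N → ℝ) → (Fin d → ℝ) → (Fin d → ℝ))
    (hinj : ∀ u ∈ U, Set.InjOn (Φ u) V)
    (hder : ∀ u ∈ U, ∀ x ∈ V, HasFDerivAt (Φ u) (fderiv ℝ (Φ u) x) x)
    (hcont : ContinuousOn (fun p : (Fin d → ℝ) × (Fin N → ℝ) => Φ p.2 p.1) (V ×ˢ U))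
    (hdet : ∀ x ∈ V, ∀ u ∈ U, |(fderiv ℝ (Φ u) x).det - 1| < 1 / 2)
    (h : (Fin d → ℝ) → ℝ) (hm : AEStronglyMeasurable h volume) :
    AEStronglyMeasurable (fun p : (Fin d → ℝ) × (Fin N → ℝ) => h (Φ p.2 p.1))
      ((volume.restrict V).prod (volume.restrict U)) := by
  classical
  have hVU : MeasurableSet (V ×ˢ U) := hV.measurableSet.prod hUmeas
  set Ψ : (Fin d → ℝ) × (Fin N → ℝ) → (Fin d → ℝ) :=
    (V ×ˢ U).piecewise (fun p => Φ p.2 p.1) 0 with hΨ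
  have hΨm : Measurable Ψ :=
    ContinuousOn.measurable_piecewise hcont continuous_zero.continuousOn hVU
  have hac : Measure.map Ψ ((volume.restrict V).prod (volume.restrict U)) ≪ volume := by
    refine Measure.AbsolutelyContinuous.mk fun s hs hs0 => ?_
    rw [Measure.map_apply hΨm hs, Measure.prod_apply_symm (hΨm hs)]
    refine lintegral_eq_zero_of_ae_eq_zero ?_
    filter_upwards [ae_restrict_mem hUmeas] with u hu
    have hsl : MeasurableSet ((fun x => (x, u)) ⁻¹' (Ψ ⁻¹' s)) :=
      (hΨm.comp measurable_prodMk_right) hs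
    rw [Measure.restrict_apply hsl]
    set A := ((fun x => (x, u)) ⁻¹' (Ψ ⁻¹' s)) ∩ V with hA
    have hAm : MeasurableSet A := hsl.inter hV.measurableSet
    have hAV : A ⊆ V := Set.inter_subset_right
    have himg : Φ u '' A ⊆ s := by
      rintro _ ⟨x, hx, rfl⟩
      have h1 : Ψ (x, u) ∈ s := hx.1
      rwa [hΨ, Set.piecewise_eq_of_mem _ _ _ (show (x, u) ∈ V ×ˢ U from ⟨hx.2, hu⟩)] at h1
    have h1 := lintegral_abs_det_fderiv_eq_addHaar_image (volume : Measure (Fin d → ℝ)) hAm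
      (fun x hx => (hder u hu x (hAV hx)).hasFDerivWithinAt) ((hinj u hu).mono hAV)
    have h2 : ∫⁻ x in A, ENNReal.ofReal (1 / 2) ≤
        ∫⁻ x in A, ENNReal.ofReal |(fderiv ℝ (Φ u) x).det| := by
      refine setLIntegral_mono' hAm fun x hx => ENNReal.ofReal_le_ofReal ?_
      have := hdet x (hAV hx) u hu
      rw [abs_lt] at this
      exact le_trans (by linarith) (le_abs_self _)
    rw [h1, measure_mono_null himg hs0, setLIntegral_const, nonpos_iff_eq_zero, mul_eq_zero] at h2
    rcases h2 with h2 | h2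
    · norm_num at h2
    · exact h2
  have hc := (hm.mono_ac hac).comp_aemeasurable hΨm.aemeasurable
  refine hc.congr ?_
  rw [Measure.prod_restrict]
  filter_upwards [ae_restrict_mem hVU] with p hp
  simp only [Function.comp, hΨ, Set.piecewise_eq_of_mem _ _ _ hp]

lemma aux_integral {d N : ℕ}
    (V : Set (Fin d → ℝ)) (hV : IsOpen V)
    (U : Set (Fin N → ℝ)) (hUmeas : MeasurableSet U) (hUb : Bornology.IsBounded U)
    (Φ : (Fin N → ℝ) → (Fin d → ℝ) → (Fin d → ℝ))
    (hinj : ∀ u ∈ U, Set.InjOn (Φ u) V)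
    (hder : ∀ u ∈ U, ∀ x ∈ V, HasFDerivAt (Φ u) (fderiv ℝ (Φ u) x) x)
    (ε : ℝ) (hε : 0 ≤ ε)
    (hdet : ∀ x ∈ V, ∀ u ∈ U, |(fderiv ℝ (Φ u) x).det - 1| < ε)
    (h : (Fin d → ℝ) → ℝ) (hh : Integrable h volume)
    (hsV : Function.support h ⊆ V)
    (hsupp : ∀ u ∈ U, Function.support h ⊆ Φ u '' V)
    (hF : Integrable (fun p : (Fin d → ℝ) × (Fin N → ℝ) => h (Φ p.2 p.1))
      ((volume.restrict V).prod (volume.restrict U))) :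
    |(∫ p : (Fin d → ℝ) × (Fin N → ℝ), h (Φ p.2 p.1)
      ∂((volume.restrict V).prod (volume.restrict U))) - volume.real U * ∫ x in V, h x|
      ≤ ε * ∫ p : (Fin d → ℝ) × (Fin N → ℝ), |h (Φ p.2 p.1)|
        ∂((volume.restrict V).prod (volume.restrict U)) := by
  have hfin : IsFiniteMeasure (volume.restrict U) :=
    ⟨by simpa using hUb.measure_lt_top⟩
  have hconst : volume.real U * ∫ x in V, h x = ∫ u in U, (∫ x in V, h x) := by
    simp
  rw [hconst, integral_prod_symm _ hF, integral_prod_symm _ hF.abs, ← integral_const_mul,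
    ← integral_sub hF.integral_prod_right (integrable_const _)]
  rw [← Real.norm_eq_abs]
  refine norm_integral_le_of_norm_le (hF.abs.integral_prod_right.const_mul ε) ?_
  filter_upwards [ae_restrict_mem hUmeas, hF.prod_left_ae] with u hu hFu
  have hd := fun x hx => (hder u hu x hx).hasFDerivWithinAt (s := V)
  have h1 := integral_image_eq_integral_abs_det_fderiv_smul (volume : Measure (Fin d → ℝ))
    hV.measurableSet hd (hinj u hu) h
  have h2 := (integrableOn_image_iff_integrableOn_abs_det_fderiv_smul
    (volume : Measure (Fin d → ℝ)) hV.measurableSet hd (hinj u hu) h).1 hh.integrableOn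
  rw [setIntegral_eq_integral_of_forall_compl_eq_zero
    (fun x hx => by_contra fun hne => hx (hsV hne))]
  rw [setIntegral_eq_integral_of_forall_compl_eq_zero
    (fun x hx => by_contra fun hne => hx (hsupp u hu hne))] at h1
  rw [h1, ← integral_sub hFu h2, ← integral_const_mul]
  refine norm_integral_le_of_norm_le (hFu.abs.const_mul ε) ?_
  filter_upwards [ae_restrict_mem hV.measurableSet] with x hx
  have h3 := hdet x hx u hu
  have h4 : h (Φ u x) - |(fderiv ℝ (Φ u) x).det| • h (Φ u x)
      = (1 - |(fderiv ℝ (Φ u) x).det|) * h (Φ u x) := by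
    rw [smul_eq_mul]; ring
  rw [h4, Real.norm_eq_abs, abs_mul]
  refine mul_le_mul_of_nonneg_right ?_ (abs_nonneg _)
  have h5 := abs_abs_sub_abs_le_abs_sub (fderiv ℝ (Φ u) x).det 1
  rw [abs_one, abs_sub_comm] at h5
  linarith

lemma aux_L1 {α : Type*} [MeasurableSpace α] (μ : Measure α) (F : ℕ → α → ℝ) (f G : α → ℝ)
    (hF : ∀ᶠ k in atTop, AEStronglyMeasurable (F k) μ)
    (hf : Integrable f μ) (hG : Integrable G μ)
    (hdom : ∀ k, ∀ᵐ p ∂μ, |F k p| ≤ G p)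
    (hint : Tendsto (fun k => ∫ p, F k p ∂μ) atTop (𝓝 (∫ p, f p ∂μ)))
    (hlim : ∀ᵐ p ∂μ, limsup (fun k => F k p) atTop ≤ f p) :
    Tendsto (fun k => ∫ p, |F k p - f p| ∂μ) atTop (𝓝 0) := by
  have hFi : ∀ᶠ k in atTop, Integrable (F k) μ := by
    filter_upwards [hF] with k hk
    exact hG.mono' hk (hdom k)
  have hpos : Tendsto (fun k => ∫ p, max (F k p - f p) 0 ∂μ) atTop (𝓝 (∫ p, (0 : ℝ) ∂μ)) := by
    refine tendsto_integral_filter_of_dominated_convergence (fun p => G p + |f p|) ?_ ?_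
      (hG.add hf.abs) ?_
    · filter_upwards [hFi] with k hk
      exact (hk.sub hf).pos_part.aestronglyMeasurable
    · refine Eventually.of_forall fun k => ?_
      filter_upwards [hdom k] with p hp
      rw [Real.norm_eq_abs, abs_of_nonneg (le_max_right _ _)]
      refine max_le ?_ ?_
      · have := le_abs_self (F k p)
        have := neg_abs_le (f p)
        linarith
      · have := abs_nonneg (F k p)
        have := abs_nonneg (f p)
        linarith
    · filter_upwards [hlim, ae_all_iff.2 hdom] with p hp hd
      have hb : IsBoundedUnder (· ≤ ·) atTop (fun k => F k p) :=
        isBoundedUnder_of ⟨G p, fun k => (le_abs_self _).trans (hd k)⟩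
      rw [Metric.tendsto_nhds]
      intro ε hε
      filter_upwards [eventually_lt_of_limsup_lt (lt_of_le_of_lt hp (lt_add_of_pos_right _ hε)) hb]
        with k hk
      rw [Real.dist_eq, sub_zero, abs_of_nonneg (le_max_right _ _)]
      exact max_lt (by linarith) hε
  rw [integral_zero] at hpos
  have h1 := (hpos.const_mul 2).sub (hint.sub_const (∫ p, f p ∂μ))
  rw [sub_self, mul_zero, sub_zero] at h1
  refine h1.congr' ?_
  filter_upwards [hFi] with k hk
  have hs : Integrable (fun p => F k p - f p) μ := hk.sub hf
  rw [← integral_sub hk hf, ← integral_const_mul,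
    ← integral_sub (hs.pos_part.const_mul 2) hs]
  refine integral_congr_ae (Eventually.of_forall fun p => ?_)
  simp only
  rcases le_total 0 (F k p - f p) with h | h
  · rw [max_eq_left h, abs_of_nonneg h]; ring
  · rw [max_eq_right h, abs_of_nonpos h]; ring

/-- The paper's integration Lemma 4.3: if `Φ_{k,u}` are injective `C¹` maps on `V`
whose Jacobians tend to `1` uniformly, `f` and the `fₖ` are compactly supported `L¹`
functions on `V` with `supp fₖ ⊆ Φ_{k,u}(V)`, the sequences are suitably dominated,
the integrals of `fₖ` converge to that of `f`, and `limsup fₖ(Φ_{k,u}(x)) ≤ f(x)`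
for a.e. `(x,u)`, then `(x,u) ↦ fₖ(Φ_{k,u}(x))` converges to `(x,u) ↦ f(x)` in
`L¹(V × U)`; in particular a subsequence converges for almost all pairs `(x,u)`. -/
theorem bergman_integration_lemma
    (d N : ℕ)
    (V : Set (Fin d → ℝ)) (hV : IsOpen V)
    (U : Set (Fin N → ℝ)) (hUmeas : MeasurableSet U) (hUb : Bornology.IsBounded U)
    (Φ : ℕ → (Fin N → ℝ) → (Fin d → ℝ) → (Fin d → ℝ))
    (hinj : ∀ k, ∀ u ∈ U, Set.InjOn (Φ k u) V)
    (hC1 : ∀ k, ∀ u ∈ U, ContDiffOn ℝ 1 (Φ k u) V)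
    (hcont : ∀ k, ContinuousOn (fun p : (Fin d → ℝ) × (Fin N → ℝ) => Φ k p.2 p.1) (V ×ˢ U))
    (hjac : ∀ ε > 0, ∃ k₀ : ℕ, ∀ k ≥ k₀, ∀ x ∈ V, ∀ u ∈ U,
      |(fderiv ℝ (Φ k u) x).det - 1| < ε)
    (f : (Fin d → ℝ) → ℝ) (fk : ℕ → (Fin d → ℝ) → ℝ)
    (hf : Integrable f (volume.restrict V))
    (hfsupp : HasCompactSupport f) (hfsub : tsupport f ⊆ V)
    (hfk : ∀ k, Integrable (fk k) (volume.restrict V))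
    (hfksupp : ∀ k, HasCompactSupport (fk k)) (hfksub : ∀ k, tsupport (fk k) ⊆ V)
    (hsupp : ∀ k, ∀ u ∈ U, Function.support (fk k) ⊆ Φ k u '' V)
    (g : (Fin d → ℝ) → ℝ) (hg : Integrable g (volume.restrict V))
    (hdom : ∀ k, ∀ᵐ x ∂(volume.restrict V), |fk k x| ≤ g x)
    (G : (Fin d → ℝ) × (Fin N → ℝ) → ℝ)
    (hG : Integrable G ((volume.restrict V).prod (volume.restrict U)))
    (hdom2 : ∀ k, ∀ᵐ p ∂((volume.restrict V).prod (volume.restrict U)),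
      |fk k (Φ k p.2 p.1)| ≤ G p)
    (hi : Tendsto (fun k => ∫ x in V, fk k x) atTop (𝓝 (∫ x in V, f x)))
    (hii : ∀ᵐ p ∂((volume.restrict V).prod (volume.restrict U)),
      limsup (fun k => fk k (Φ k p.2 p.1)) atTop ≤ f p.1) :
    Tendsto
      (fun k => ∫ p, |fk k (Φ k p.2 p.1) - f p.1|
        ∂((volume.restrict V).prod (volume.restrict U)))
      atTop (𝓝 0) ∧
    ∃ φ : ℕ → ℕ, StrictMono φ ∧
      ∀ᵐ p ∂((volume.restrict V).prod (volume.restrict U)),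
        Tendsto (fun j => fk (φ j) (Φ (φ j) p.2 p.1)) atTop (𝓝 (f p.1)) := by
  have hfin : IsFiniteMeasure (volume.restrict U) :=
    ⟨by simpa using hUb.measure_lt_top⟩
  have hder : ∀ k, ∀ u ∈ U, ∀ x ∈ V, HasFDerivAt (Φ k u) (fderiv ℝ (Φ k u) x) x :=
    fun k u hu x hx => (((hC1 k u hu).differentiableOn one_ne_zero).differentiableAt
      (hV.mem_nhds hx)).hasFDerivAt
  have hsV : ∀ k, Function.support (fk k) ⊆ V := fun k => (subset_tsupport _).trans (hfksub k)
  have hfkI : ∀ k, Integrable (fk k) volume := fun k =>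
    (integrableOn_iff_integrable_of_support_subset (hsV k)).1 (hfk k)
  obtain ⟨k₀, hk₀⟩ := hjac (1 / 2) (by norm_num)
  have hmeas : ∀ k ≥ k₀, AEStronglyMeasurable
      (fun p : (Fin d → ℝ) × (Fin N → ℝ) => fk k (Φ k p.2 p.1))
      ((volume.restrict V).prod (volume.restrict U)) := fun k hk =>
    aux_aesm V hV U hUmeas (Φ k) (hinj k) (hder k) (hcont k) (hk₀ k hk) (fk k)
      (hfkI k).aestronglyMeasurable
  have hFi : ∀ k ≥ k₀, Integrable
      (fun p : (Fin d → ℝ) × (Fin N → ℝ) => fk k (Φ k p.2 p.1))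
      ((volume.restrict V).prod (volume.restrict U)) := fun k hk =>
    hG.mono' (hmeas k hk) (hdom2 k)
  have hfi : Integrable (fun p : (Fin d → ℝ) × (Fin N → ℝ) => f p.1)
      ((volume.restrict V).prod (volume.restrict U)) := hf.comp_fst _
  have hfint : ∫ p : (Fin d → ℝ) × (Fin N → ℝ), f p.1
      ∂((volume.restrict V).prod (volume.restrict U)) = volume.real U * ∫ x in V, f x := by
    rw [integral_prod_symm _ hfi]
    simp
  have hint : Tendsto (fun k => ∫ p : (Fin d → ℝ) × (Fin N → ℝ), fk k (Φ k p.2 p.1)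
      ∂((volume.restrict V).prod (volume.restrict U))) atTop
      (𝓝 (∫ p : (Fin d → ℝ) × (Fin N → ℝ), f p.1
        ∂((volume.restrict V).prod (volume.restrict U)))) := by
    rw [hfint]
    have hz : Tendsto (fun k => (∫ p : (Fin d → ℝ) × (Fin N → ℝ), fk k (Φ k p.2 p.1)
      ∂((volume.restrict V).prod (volume.restrict U))) - volume.real U * ∫ x in V, fk k x)
      atTop (𝓝 0) := by
      rw [Metric.tendsto_atTop]
      intro ε hε
      set C := ∫ p, |G p| ∂((volume.restrict V).prod (volume.restrict U)) with hC
      have hC0 : 0 ≤ C := integral_nonneg fun p => abs_nonneg _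
      have hδ : 0 < ε / (C + 1) := by positivity
      obtain ⟨k₁, hk₁⟩ := hjac (ε / (C + 1)) hδ
      refine ⟨max k₀ k₁, fun k hk => ?_⟩
      have hka : k ≥ k₀ := le_trans (le_max_left _ _) hk
      have hkb : k ≥ k₁ := le_trans (le_max_right _ _) hk
      rw [Real.dist_eq, sub_zero]
      refine lt_of_le_of_lt (aux_integral V hV U hUmeas hUb (Φ k) (hinj k) (hder k) _ hδ.le
        (hk₁ k hkb) (fk k) (hfkI k) (hsV k) (hsupp k) (hFi k hka)) ?_
      have hle : ∫ p : (Fin d → ℝ) × (Fin N → ℝ), |fk k (Φ k p.2 p.1)|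
          ∂((volume.restrict V).prod (volume.restrict U)) ≤ C := by
        refine integral_mono_ae (hFi k hka).abs hG.abs ?_
        filter_upwards [hdom2 k] with p hp
        exact hp.trans (le_abs_self _)
      calc _ ≤ ε / (C + 1) * C := mul_le_mul_of_nonneg_left hle hδ.le
        _ < ε / (C + 1) * (C + 1) := mul_lt_mul_of_pos_left (by linarith) hδ
        _ = ε := by field_simp
    have := hz.add (hi.const_mul (volume.real U))
    simpa using this
  have hL1 := aux_L1 ((volume.restrict V).prod (volume.restrict U))
    (fun k p => fk k (Φ k p.2 p.1)) (fun p => f p.1) G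
    (eventually_atTop.2 ⟨k₀, hmeas⟩) hfi hG hdom2 hint hii
  refine ⟨hL1, ?_⟩
  have hTM : TendstoInMeasure ((volume.restrict V).prod (volume.restrict U))
      (fun (j : ℕ) (p : (Fin d → ℝ) × (Fin N → ℝ)) => fk (j + k₀) (Φ (j + k₀) p.2 p.1)) atTop
      (fun p => f p.1) := by
    refine tendstoInMeasure_of_tendsto_eLpNorm one_ne_zero
      (fun j => hmeas _ (Nat.le_add_left _ _)) hfi.aestronglyMeasurable ?_
    have h1 := ENNReal.tendsto_ofReal ((tendsto_add_atTop_iff_nat k₀).2 hL1)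
    rw [ENNReal.ofReal_zero] at h1
    refine h1.congr fun j => ?_
    rw [eLpNorm_one_eq_lintegral_enorm]
    exact ofReal_integral_norm_eq_lintegral_enorm ((hFi _ (Nat.le_add_left _ _)).sub hfi)
  obtain ⟨ns, hns, hae⟩ := hTM.exists_seq_tendsto_ae
  exact ⟨fun j => ns j + k₀, fun a b hab => Nat.add_lt_add_right (hns hab) _, hae⟩
end

section
/- Let n ≥ 2 and write points of ℂⁿ as (z, w) with z ∈ ℂ^{n−1} and w ∈ ℂ. Let Ω = {(z, w) ∈ ℂ^{n−1} × ℂ : Im w < |z|²} be the interior of the model pseudoconcave domain, where |z|² = Σ_{i=1}^{n−1} |z_i|². Then there exists a constant C > 0, depending only on n, such that for every function f holomorphic on Ω and every real number v < 0, |f(0, iv)|² ≤ (C / v²) ∫_{{(z,w) ∈ Ω : |z| ≤ 1, |w − iv| ≤ |v|/2}} |f|² dV, where dV is Lebesgue measure on ℂⁿ ≅ ℝ^{2n}. -/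
open MeasureTheory

lemma ray_mul_mp (a : ℂ) (ha : ‖a‖ = 1) :
    MeasurePreserving (fun x : ℂ => a * x) volume volume := by
  have := (rotation (⟨a, by simp [Submonoid.unitSphere, ha]⟩ : Circle)).measurePreserving
  exact this

lemma ray_rot_mp (m : ℕ) (a b : ℂ) (ha : ‖a‖ = 1) :
    MeasurePreserving (fun p : (Fin m → ℂ) × ℂ => ((fun i => a * p.1 i), b + a * (p.2 - b)))
      volume volume := by
  have h1 : MeasurePreserving (fun z : Fin m → ℂ => fun i => a * z i) volume volume :=
    volume_preserving_pi (fun _ => ray_mul_mp a ha)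
  have h2 : MeasurePreserving (fun w : ℂ => b + a * (w - b)) volume volume :=
    (measurePreserving_add_left volume b).comp
      ((ray_mul_mp a ha).comp (measurePreserving_sub_right volume b))
  exact h1.prod h2

lemma ray_submean (g : ℂ → ℂ) (hg : DiffContOnCl ℂ g (Metric.ball 0 1)) :
    2 * Real.pi * ‖g 0‖ ^ 2 ≤ ∫ θ in Set.Ioc 0 (2 * Real.pi), ‖g (circleMap 0 1 θ)‖ ^ 2 := by
  have h2 : DiffContOnCl ℂ (fun x => g x * g x) (Metric.ball 0 |1|) := by
    simpa using hg.smul hg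
  have h := h2.circleAverage
  rw [Real.circleAverage_def, intervalIntegral.integral_of_le Real.two_pi_pos.le] at h
  have h3 := norm_integral_le_integral_norm (μ := volume.restrict (Set.Ioc 0 (2 * Real.pi)))
    (fun θ => g (circleMap 0 1 θ) * g (circleMap 0 1 θ))
  have h4 := congrArg norm h
  rw [norm_smul, norm_mul, Real.norm_of_nonneg (by positivity)] at h4
  simp only [← sq] at h3 h4
  rw [← h4, ← mul_assoc, mul_inv_cancel₀ (by positivity), one_mul]
  simp only [norm_pow] at h3
  exact h3

theorem ray_main (m : ℕ) (b : ℂ) (r : ℝ) (f : (Fin m → ℂ) × ℂ → ℂ)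
    (K : Set ((Fin m → ℂ) × ℂ)) (U : Set ((Fin m → ℂ) × ℂ))
    (hK : K = {z : Fin m → ℂ | ∑ i, ‖z i‖ ^ 2 ≤ 1} ×ˢ Metric.closedBall b r)
    (hKc : IsCompact K) (hKU : K ⊆ U) (hf : DifferentiableOn ℂ f U) :
    volume.real K * ‖f (0, b)‖ ^ 2 ≤ ∫ p in K, ‖f p‖ ^ 2 := by
  let R : ℂ → (Fin m → ℂ) × ℂ → (Fin m → ℂ) × ℂ :=
    fun a p => ((fun i => a * p.1 i), b + a * (p.2 - b))
  have hRc : Continuous (fun q : ℂ × ((Fin m → ℂ) × ℂ) => R q.1 q.2) := by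
    simp only [R]; fun_prop
  have hRK : ∀ a p, ‖a‖ ≤ 1 → p ∈ K → R a p ∈ K := by
    intro a p ha hp
    rw [hK] at hp ⊢
    obtain ⟨h1, h2⟩ := hp
    simp only [Set.mem_ofPred_eq, mem_closedBall_iff_norm] at h1 h2
    refine ⟨?_, ?_⟩
    · simp only [R, Set.mem_ofPred_eq, norm_mul]
      refine le_trans (Finset.sum_le_sum fun i _ => ?_) h1
      gcongr
      exact mul_le_of_le_one_left (norm_nonneg _) ha
    · simp only [R, mem_closedBall_iff_norm, add_sub_cancel_left, norm_mul]
      exact (mul_le_of_le_one_left (norm_nonneg _) ha).trans h2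
  have hRp : ∀ a, ‖a‖ = 1 → (R a) ⁻¹' K = K := by
    intro a ha
    ext p
    refine ⟨fun h => ?_, fun h => hRK a p ha.le h⟩
    have ha0 : a ≠ 0 := by rintro rfl; simp at ha
    have := hRK a⁻¹ _ (by simp [ha]) h
    convert this
    ext <;> simp [R, ha0]
  have hRi : ∀ a, ‖a‖ = 1 → ∫ p in K, ‖f (R a p)‖ ^ 2 = ∫ p in K, ‖f p‖ ^ 2 := by
    intro a ha
    have ha0 : a ≠ 0 := by rintro rfl; simp at ha
    have hinj : Function.Injective (R a) := by
      intro p q h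
      simp only [R, Prod.mk.injEq, funext_iff] at h
      ext i
      · exact mul_left_cancel₀ ha0 (h.1 i)
      · simpa [ha0] using h.2
    have hc : Continuous (R a) := by simp only [R]; fun_prop
    have := (ray_rot_mp m a b ha).setIntegral_preimage_emb
      (hc.measurableEmbedding hinj) (fun p => ‖f p‖ ^ 2) K
    change ∫ p in (R a) ⁻¹' K, ‖f (R a p)‖ ^ 2 = _ at this
    rwa [hRp a ha] at this
  let F : ℝ → (Fin m → ℂ) × ℂ → ℝ := fun θ p => ‖f (R (circleMap 0 1 θ) p)‖ ^ 2
  have hcm : ∀ θ, ‖circleMap 0 1 θ‖ = 1 := by intro θ; simp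
  have hpt : ∀ p ∈ K, 2 * Real.pi * ‖f (0, b)‖ ^ 2 ≤ ∫ θ in Set.Ioc 0 (2 * Real.pi), F θ p := by
    intro p hp
    have hd : Differentiable ℂ (fun a => R a p) := by
      simp only [R]
      refine Differentiable.prodMk ?_ (by fun_prop)
      rw [differentiable_pi]; intro i; fun_prop
    have := ray_submean (fun a => f (R a p)) ?_
    · convert this using 4
      simp [R]; rfl
    · apply DifferentiableOn.diffContOnCl
      rw [closure_ball _ one_ne_zero]
      refine hf.comp hd.differentiableOn ?_
      intro a ha
      exact hKU (hRK a p (by simpa using ha) hp)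
  have hFc : ContinuousOn (Function.uncurry F) (Set.Icc 0 (2 * Real.pi) ×ˢ K) := by
    have : ContinuousOn (fun q : ℝ × ((Fin m → ℂ) × ℂ) => f (R (circleMap 0 1 q.1) q.2))
        (Set.Icc 0 (2 * Real.pi) ×ˢ K) := by
      refine hf.continuousOn.comp (Continuous.continuousOn ?_) ?_
      · exact hRc.comp (((continuous_circleMap 0 1).comp continuous_fst).prodMk continuous_snd)
      · rintro ⟨θ, p⟩ ⟨_, hp⟩
        exact hKU (hRK _ p (hcm θ).le hp)
    exact this.norm.pow 2
  have hFi : Integrable (Function.uncurry F)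
      ((volume.restrict (Set.Ioc 0 (2 * Real.pi))).prod (volume.restrict K)) := by
    rw [Measure.prod_restrict]
    exact (hFc.integrableOn_compact (isCompact_Icc.prod hKc)).mono_set
      (Set.prod_mono Set.Ioc_subset_Icc_self subset_rfl)
  have hsw := integral_integral_swap hFi
  have e1 : ∫ θ in Set.Ioc 0 (2 * Real.pi), ∫ p in K, F θ p
      = 2 * Real.pi * ∫ p in K, ‖f p‖ ^ 2 := by
    have : ∀ θ, ∫ p in K, F θ p = ∫ p in K, ‖f p‖ ^ 2 := fun θ => hRi _ (hcm θ)
    simp only [this]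
    simp [Real.pi_pos.le]
  have e2 : volume.real K * (2 * Real.pi * ‖f (0, b)‖ ^ 2) ≤
      ∫ p in K, ∫ θ in Set.Ioc 0 (2 * Real.pi), F θ p := by
    have h0 : ∫ p in K, (2 * Real.pi * ‖f (0, b)‖ ^ 2) =
        volume.real K * (2 * Real.pi * ‖f (0, b)‖ ^ 2) := by
      rw [setIntegral_const, smul_eq_mul]
    rw [← h0]
    refine setIntegral_mono_on (integrableOn_const hKc.measure_lt_top.ne) ?_ hKc.measurableSet hpt
    exact hFi.integral_prod_right
  rw [← hsw, e1] at e2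
  have hp := Real.two_pi_pos
  refine le_of_mul_le_mul_left ?_ hp
  linarith

/-- Second appendix lemma: for `f` holomorphic on the interior
`Ω = {(z,w) : Im w < |z|²}` of the model pseudoconcave domain and `v < 0`,
`|f(0, iv)|² ≤ (C/v²) ∫_{|z| ≤ 1, |w - iv| ≤ |v|/2, (z,w) ∈ Ω} |f|² dV`. -/
theorem bound_on_inward_ray (n : ℕ) (hn : 2 ≤ n) :
    ∃ C : ℝ, 0 < C ∧ ∀ f : (Fin (n - 1) → ℂ) × ℂ → ℂ,
      DifferentiableOn ℂ f
        {p : (Fin (n - 1) → ℂ) × ℂ | p.2.im < ∑ i, ‖p.1 i‖ ^ 2} →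
      ∀ v : ℝ, v < 0 →
        ‖f (0, Complex.I * v)‖ ^ 2 ≤ (C / v ^ 2) *
          ∫ p in {p : (Fin (n - 1) → ℂ) × ℂ | p.2.im < ∑ i, ‖p.1 i‖ ^ 2 ∧
              (∑ i, ‖p.1 i‖ ^ 2) ≤ 1 ∧ ‖p.2 - Complex.I * v‖ ≤ |v| / 2},
            ‖f p‖ ^ 2 := by
  set B : Set (Fin (n - 1) → ℂ) := {z | ∑ i, ‖z i‖ ^ 2 ≤ 1} with hB
  have hBcl : IsClosed B := isClosed_le (by fun_prop) continuous_const
  have hBc : IsCompact B := by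
    refine (isCompact_closedBall (0 : Fin (n - 1) → ℂ) 1).of_isClosed_subset hBcl ?_
    intro z hz
    rw [mem_closedBall_zero_iff, pi_norm_le_iff_of_nonneg zero_le_one]
    intro i
    have h1 : ‖z i‖ ^ 2 ≤ ∑ i, ‖z i‖ ^ 2 :=
      Finset.single_le_sum (f := fun i => ‖z i‖ ^ 2) (fun _ _ => by positivity) (Finset.mem_univ i)
    have h2 : ∑ i, ‖z i‖ ^ 2 ≤ 1 := hz
    nlinarith [norm_nonneg (z i)]
  have hBpos : 0 < volume.real B := by
    refine ENNReal.toReal_pos ?_ hBc.measure_lt_top.ne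
    have ho : IsOpen {z : Fin (n - 1) → ℂ | ∑ i, ‖z i‖ ^ 2 < 1} :=
      isOpen_lt (by fun_prop) continuous_const
    have := ho.measure_pos volume ⟨0, by simp⟩
    exact (this.trans_le (measure_mono fun z (hz : ∑ i, ‖z i‖ ^ 2 < 1) => hz.le)).ne'
  have hpi := Real.pi_pos
  refine ⟨4 / (Real.pi * volume.real B), by positivity, ?_⟩
  intro f hf v hv
  have hset : {p : (Fin (n - 1) → ℂ) × ℂ | p.2.im < ∑ i, ‖p.1 i‖ ^ 2 ∧
              (∑ i, ‖p.1 i‖ ^ 2) ≤ 1 ∧ ‖p.2 - Complex.I * v‖ ≤ |v| / 2} =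
      B ×ˢ Metric.closedBall (Complex.I * v) (|v| / 2) := by
    ext p
    simp only [Set.mem_ofPred_eq, Set.mem_prod, mem_closedBall_iff_norm, hB]
    refine ⟨fun h => h.2, fun h => ⟨?_, h⟩⟩
    have h1 := (Complex.abs_im_le_norm (p.2 - Complex.I * v)).trans h.2
    simp only [Complex.sub_im, Complex.mul_im, Complex.I_re, Complex.I_im, Complex.ofReal_re,
      Complex.ofReal_im] at h1
    have h2 := (abs_le.1 h1).2
    rw [abs_of_neg hv] at h2
    have : 0 ≤ ∑ i, ‖p.1 i‖ ^ 2 := Finset.sum_nonneg fun _ _ => by positivity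
    linarith
  have hsub : B ×ˢ Metric.closedBall (Complex.I * v) (|v| / 2) ⊆
      {p : (Fin (n - 1) → ℂ) × ℂ | p.2.im < ∑ i, ‖p.1 i‖ ^ 2} := by
    rw [← hset]; exact fun p hp => hp.1
  rw [hset]
  have key := ray_main (n - 1) (Complex.I * v) (|v| / 2) f _ _
    rfl
    (hBc.prod (isCompact_closedBall _ _)) hsub hf
  have hvol : volume.real (B ×ˢ Metric.closedBall (Complex.I * v) (|v| / 2)) =
      volume.real B * (Real.pi * v ^ 2 / 4) := by
    rw [Measure.volume_eq_prod, measureReal_prod_prod]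
    congr 1
    rw [Measure.real, Complex.volume_closedBall]
    rw [ENNReal.toReal_mul, ENNReal.toReal_pow, ENNReal.toReal_ofReal (by positivity), div_pow, sq_abs]
    simp
    ring
  rw [← hB, hvol] at key
  have hv2 : 0 < v ^ 2 := sq_pos_of_neg hv
  rw [div_div, div_mul_eq_mul_div, le_div_iff₀ (by positivity)]
  linarith
end
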